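/- arXiv:1501.00872 — 6 statements merged into one kernel-verified Lean document; each statement's English description precedes it below -/
import Mathlib

section
/- For all natural numbers k and j with 1 ≤ j and 2j < k, the real number (4·cos²(jπ/k))⁻¹ is a root of the Fibonacci polynomial F_k, i.e., evaluating F_k at (4·cos²(jπ/k))⁻¹ gives 0. -/
open Polynomial Real

/-- The Fibonacci polynomials: `F 0 = 0`, `F 1 = 1`, `F (k+2) = F (k+1) - X * F k`. -/
noncomputable def fibPoly : ℕ → Polynomial ℤ
  | 0 => 0
  | 1 => 1
  | (k + 2) => fibPoly (k + 1) - Polynomial.X * fibPoly k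

theorem fibPoly_aux (t : ℝ) (hc : Real.cos t ≠ 0) (n : ℕ) :
    Polynomial.aeval ((4 * Real.cos t ^ 2)⁻¹ : ℝ) (fibPoly n) * (2 * Real.cos t) ^ n * Real.sin t
      = 2 * Real.cos t * Real.sin (n * t) := by
  induction n using Nat.twoStepInduction with
  | zero => simp [fibPoly]
  | one => simp [fibPoly]
  | more n ih1 ih2 =>
    have hs : Real.sin ((n + 2 : ℕ) * t)
        = 2 * Real.cos t * Real.sin ((n + 1 : ℕ) * t) - Real.sin (n * t) := by
      have e1 : ((n + 2 : ℕ) : ℝ) * t = (n + 1 : ℕ) * t + t := by push_cast; ring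
      have e2 : (n : ℝ) * t = (n + 1 : ℕ) * t - t := by push_cast; ring
      rw [e1, e2, Real.sin_add, Real.sin_sub]; ring
    have hx : (4 * Real.cos t ^ 2)⁻¹ * (2 * Real.cos t) ^ 2 = 1 := by
      field_simp; norm_num
    rw [hs, fibPoly, map_sub, map_mul, Polynomial.aeval_X]
    linear_combination (2 * Real.cos t) * ih2 - ih1
      - (Polynomial.aeval ((4 * Real.cos t ^ 2)⁻¹ : ℝ) (fibPoly n)) * (2 * Real.cos t) ^ n
        * Real.sin t * hx

theorem fibPoly_roots (k j : ℕ) (hj : 1 ≤ j) (hjk : 2 * j < k) :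
    Polynomial.aeval ((4 * Real.cos (j * Real.pi / k) ^ 2)⁻¹ : ℝ) (fibPoly k) = 0 := by
  have hk : (0 : ℝ) < k := by exact_mod_cast (by omega : 0 < k)
  have hj0 : (0 : ℝ) < j := by exact_mod_cast hj
  have hjk' : (2 : ℝ) * j < k := by exact_mod_cast hjk
  have h0 : 0 < (j : ℝ) * Real.pi / k := by positivity
  have h1 : (j : ℝ) * Real.pi / k < Real.pi / 2 := by
    rw [div_lt_div_iff₀ hk two_pos]
    nlinarith [Real.pi_pos]
  have hc : 0 < Real.cos (j * Real.pi / k) :=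
    Real.cos_pos_of_mem_Ioo ⟨by linarith, h1⟩
  have hs : 0 < Real.sin (j * Real.pi / k) :=
    Real.sin_pos_of_pos_of_lt_pi h0 (by linarith)
  have h := fibPoly_aux _ hc.ne' k
  rw [show (k : ℝ) * (j * Real.pi / k) = j * Real.pi by field_simp, Real.sin_nat_mul_pi,
    mul_zero] at h
  rcases mul_eq_zero.mp h with h | h
  · rcases mul_eq_zero.mp h with h | h
    · exact h
    · exact absurd h (by positivity)
  · exact absurd h hs.ne'
end

section
/- For every natural number k, the real number (4·cos²(π/(2k+3)))⁻¹ is the smallest positive real root of the Fibonacci polynomial F_{2k+3}: evaluating F_{2k+3} at (4·cos²(π/(2k+3)))⁻¹ gives 0, and for every real x with 0 < x < (4·cos²(π/(2k+3)))⁻¹ the evaluation of F_{2k+3} at x is nonzero. -/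
open Polynomial Real

theorem fibPoly_aeval_trig (θ x : ℝ) (hx : 4 * Real.cos θ ^ 2 * x = 1) (n : ℕ) :
    (2 * Real.cos θ) ^ n * Real.sin θ * Polynomial.aeval x (fibPoly n)
      = 2 * Real.cos θ * Real.sin (n * θ) ∧
    (2 * Real.cos θ) ^ (n + 1) * Real.sin θ * Polynomial.aeval x (fibPoly (n + 1))
      = 2 * Real.cos θ * Real.sin ((n + 1 : ℕ) * θ) := by
  induction n with
  | zero => simp [fibPoly]
  | succ n ih =>
    obtain ⟨h0, h1⟩ := ih
    refine ⟨h1, ?_⟩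
    have e : Real.sin ((n + 1 + 1 : ℕ) * θ)
        = 2 * Real.cos θ * Real.sin ((n + 1 : ℕ) * θ) - Real.sin (n * θ) := by
      have e1 : ((n + 1 + 1 : ℕ) : ℝ) * θ = (n + 1 : ℕ) * θ + θ := by push_cast; ring
      have e2 : (n : ℝ) * θ = (n + 1 : ℕ) * θ - θ := by push_cast; ring
      rw [e1, e2, Real.sin_add, Real.sin_sub]; ring
    have r : Polynomial.aeval x (fibPoly (n + 1 + 1))
        = Polynomial.aeval x (fibPoly (n + 1)) - x * Polynomial.aeval x (fibPoly n) := by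
      simp [fibPoly]
    rw [e, r]
    linear_combination 2 * Real.cos θ * h1 - h0
      - (2 * Real.cos θ) ^ n * Real.sin θ * Polynomial.aeval x (fibPoly n) * hx

theorem fibPoly_aeval_pos (x : ℝ) (h0 : 0 < x) (hx : x ≤ 1 / 4) (n : ℕ) :
    0 ≤ Polynomial.aeval x (fibPoly n) ∧ 0 < Polynomial.aeval x (fibPoly (n + 1)) ∧
    Polynomial.aeval x (fibPoly n) ≤ 2 * Polynomial.aeval x (fibPoly (n + 1)) := by
  induction n with
  | zero => simp [fibPoly]
  | succ n ih =>
    obtain ⟨h1, h2, h3⟩ := ih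
    have r : Polynomial.aeval x (fibPoly (n + 1 + 1))
        = Polynomial.aeval x (fibPoly (n + 1)) - x * Polynomial.aeval x (fibPoly n) := by
      simp [fibPoly]
    have := mul_le_mul_of_nonneg_right hx h1
    rw [r]
    refine ⟨h2.le, ?_, ?_⟩ <;> linarith

theorem fibPoly_smallest_positive_root (k : ℕ) :
    Polynomial.aeval ((4 * Real.cos (Real.pi / (2 * k + 3)) ^ 2)⁻¹ : ℝ)
        (fibPoly (2 * k + 3)) = 0 ∧
      ∀ x : ℝ, 0 < x → x < (4 * Real.cos (Real.pi / (2 * k + 3)) ^ 2)⁻¹ →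
        Polynomial.aeval x (fibPoly (2 * k + 3)) ≠ 0 := by
  have hk : (0 : ℝ) ≤ k := Nat.cast_nonneg k
  have hN : (0 : ℝ) < 2 * k + 3 := by positivity
  have hpi := Real.pi_pos
  set t : ℝ := Real.pi / (2 * k + 3) with ht
  have htN : (2 * k + 3) * t = Real.pi := by rw [ht]; field_simp
  have ht0 : 0 < t := by positivity
  have ht2 : t < Real.pi / 2 := by nlinarith
  have hc : 0 < Real.cos t := Real.cos_pos_of_mem_Ioo ⟨by linarith, ht2⟩
  constructor
  · have h := (fibPoly_aeval_trig t (4 * Real.cos t ^ 2)⁻¹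
      (mul_inv_cancel₀ (by positivity)) (2 * k + 3)).1
    have hs : 0 < Real.sin t := Real.sin_pos_of_pos_of_lt_pi ht0 (by linarith)
    push_cast at h
    rw [htN, Real.sin_pi, mul_zero] at h
    exact (mul_eq_zero.mp h).resolve_left (by positivity)
  · intro x hx0 hx
    rcases le_or_gt x (1 / 4) with h4 | h4
    · exact (fibPoly_aeval_pos x hx0 h4 (2 * k + 2)).2.1.ne'
    · have hsx : 0 < √x := Real.sqrt_pos.mpr hx0
      have hsq : √x ^ 2 = x := Real.sq_sqrt hx0.le
      set y : ℝ := (2 * √x)⁻¹ with hy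
      have hy0 : 0 < y := by positivity
      have hyx : 4 * y ^ 2 * x = 1 := by
        rw [hy, ← hsq]; field_simp; norm_num
      have hy1 : y < 1 := by
        by_contra hcon
        push Not at hcon
        have : 1 ≤ y ^ 2 := one_le_pow₀ hcon
        nlinarith
      have hyc : Real.cos t < y := by
        have h1 : x * (4 * Real.cos t ^ 2) < 1 := by
          rwa [← one_div, lt_div_iff₀ (by positivity)] at hx
        by_contra hcon
        push Not at hcon
        have : y ^ 2 ≤ Real.cos t ^ 2 := by gcongr
        nlinarith
      have hcos : Real.cos (Real.arccos y) = y := Real.cos_arccos (by linarith) hy1.le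
      have hθ0 : 0 < Real.arccos y := Real.arccos_pos.mpr hy1
      have hθt : Real.arccos y < t := by
        rw [← Real.arccos_cos ht0.le (by linarith)]
        exact Real.arccos_lt_arccos (by linarith) hyc hy1.le
      have h := (fibPoly_aeval_trig (Real.arccos y) x (by rw [hcos]; exact hyx) (2 * k + 3)).1
      intro hF
      rw [hF, hcos, mul_zero] at h
      push_cast at h
      have : 0 < Real.sin ((2 * k + 3) * Real.arccos y) := by
        apply Real.sin_pos_of_pos_of_lt_pi (by positivity)
        rw [← htN]
        gcongr
      have := mul_pos (mul_pos two_pos hy0) this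
      linarith
end

section
/- Let T : ℕ → ℚ⟦X⟧ be the sequence of formal power series defined by T 0 = 0 and T (k+1) = X·(1 − T k)⁻¹ (for each k, the power series 1 − T k has constant coefficient 1 and hence is invertible). Then for every natural number k, one has F_{k+1}·(T k) = X·F_k in ℚ⟦X⟧, where the Fibonacci polynomials are regarded as formal power series. -/
open PowerSeries

/-- The Fibonacci polynomials regarded as formal power series over `ℚ`. -/
noncomputable def fibPS (k : ℕ) : PowerSeries ℚ :=
  (((fibPoly k).map (Int.castRingHom ℚ) : Polynomial ℚ) : PowerSeries ℚ)

/-- The generating function of ordered trees of height at most `k`: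
`T 0 = 0`, `T (k+1) = X * (1 - T k)⁻¹`. -/
noncomputable def treeGF : ℕ → PowerSeries ℚ
  | 0 => 0
  | (k + 1) => PowerSeries.X * (1 - treeGF k)⁻¹

theorem fibPS_rec (k : ℕ) : fibPS (k + 2) = fibPS (k + 1) - PowerSeries.X * fibPS k := by
  simp [fibPS, fibPoly]

theorem treeGF_const (k : ℕ) : PowerSeries.constantCoeff (treeGF k) = 0 := by
  cases k <;> simp [treeGF]

theorem treeGF_eq_fib_ratio (k : ℕ) :
    fibPS (k + 1) * treeGF k = PowerSeries.X * fibPS k := by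
  induction k with
  | zero => simp [treeGF, fibPS, fibPoly]
  | succ k ih =>
    have hinv : (1 - treeGF k) * (1 - treeGF k)⁻¹ = 1 :=
      PowerSeries.mul_inv_cancel _ (by simp [treeGF_const])
    rw [fibPS_rec, treeGF, ← ih]
    linear_combination PowerSeries.X * fibPS (k + 1) * hinv
end

section
/- Let T : ℕ → ℚ⟦X⟧ be the sequence of formal power series defined by T 0 = 0 and T (k+1) = X·(1 − T k)⁻¹. Then for every natural number k ≥ 1, one has (T k − T (k−1))·F_k·F_{k+1} = X^k in ℚ⟦X⟧, where the Fibonacci polynomials are regarded as formal power series. -/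
open PowerSeries

theorem treeGF_step (k : ℕ) : treeGF (k + 1) * (1 - treeGF k) = PowerSeries.X := by
  have h : PowerSeries.constantCoeff (1 - treeGF k) ≠ 0 := by simp [treeGF_const]
  rw [treeGF, mul_assoc, PowerSeries.inv_mul_cancel _ h, mul_one]

theorem treeGF_mul_fib (k : ℕ) : treeGF k * fibPS (k + 1) = PowerSeries.X * fibPS k := by
  induction k with
  | zero => simp [treeGF, fibPS, fibPoly]
  | succ k ih =>
    linear_combination treeGF (k + 1) * fibPS_rec k + fibPS (k + 1) * treeGF_step k
      + treeGF (k + 1) * ih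

theorem fibPS_cassini (k : ℕ) :
    fibPS (k + 1) ^ 2 - fibPS k * fibPS (k + 2) = PowerSeries.X ^ k := by
  induction k with
  | zero => simp [fibPS, fibPoly]
  | succ k ih =>
    have h1 := fibPS_rec k
    have h2 := fibPS_rec (k + 1)
    rw [pow_succ]
    linear_combination PowerSeries.X * ih + fibPS (k + 2) * h1 - fibPS (k + 1) * h2

theorem treeGF_diff_mul_fib (k : ℕ) (hk : 1 ≤ k) :
    (treeGF k - treeGF (k - 1)) * fibPS k * fibPS (k + 1) = PowerSeries.X ^ k := by
  obtain ⟨n, rfl⟩ : ∃ n, k = n + 1 := ⟨k - 1, by omega⟩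
  rw [Nat.add_sub_cancel, pow_succ]
  have h1 := treeGF_mul_fib (n + 1)
  have h2 := treeGF_mul_fib n
  have h3 := fibPS_cassini n
  linear_combination fibPS (n + 1) * h1 - fibPS (n + 2) * h2 + PowerSeries.X * h3
end

section
/- Let C := ∑_{n≥0} catalan(n)·X^n and B := ∑_{n≥0} (binomial(2n, n))·X^n in the formal power series ring ℤ⟦X⟧. Then B·(1 − 2·X·C) = 1. -/
open PowerSeries

/-- The Catalan generating function `∑ catalan n • Xⁿ` over `ℤ`. -/
noncomputable def catalanGF : PowerSeries ℤ :=
  PowerSeries.mk fun n => (catalan n : ℤ)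

/-- The central binomial generating function `∑ (2n choose n) • Xⁿ` over `ℤ`. -/
noncomputable def centralBinomGF : PowerSeries ℤ :=
  PowerSeries.mk fun n => ((2 * n).choose n : ℤ)

theorem catalanGF_eq : catalanGF = catalanGF ^ 2 * X + 1 := by
  have h := congrArg (PowerSeries.map (Nat.castRingHom ℤ)) catalanSeries_sq_mul_X_add_one
  have h2 : PowerSeries.map (Nat.castRingHom ℤ) catalanSeries = catalanGF := by
    ext n
    simp [catalanGF]
  simp only [map_add, map_mul, map_pow, h2, PowerSeries.map_X, map_one] at h
  exact h.symm

theorem derivative_X_mul_catalanGF :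
    PowerSeries.derivative ℤ (X * catalanGF) = centralBinomGF := by
  ext n
  rw [PowerSeries.coeff_derivative, PowerSeries.coeff_succ_X_mul]
  simp only [catalanGF, centralBinomGF, coeff_mk]
  rw [← Nat.centralBinom_eq_two_mul_choose, ← succ_mul_catalan_eq_centralBinom]
  push_cast
  ring

theorem centralBinomGF_mul_catalanGF :
    centralBinomGF * (1 - 2 * PowerSeries.X * catalanGF) = 1 := by
  have h : X * catalanGF = X + (X * catalanGF) * (X * catalanGF) := by
    linear_combination (X : PowerSeries ℤ) * catalanGF_eq
  have h' := congrArg (PowerSeries.derivative ℤ) h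
  rw [map_add, Derivation.leibniz _ (X * catalanGF) (X * catalanGF), derivative_X_mul_catalanGF, PowerSeries.derivative_X] at h'
  simp only [smul_eq_mul] at h'
  linear_combination h'
end

section
/- For every natural number k, the Fibonacci polynomials satisfy the identity (F_{2k+3}² − X^{2k+2})·F_{k+2} = (F_{k+3} − X·F_{k+1})·F_{k+2}²·F_{2k+2} in the polynomial ring ℤ[X]. (This is the denominator-cleared form of the equality between z²·(1 − (z^{k+1}/F_{2k+3})²)·F_{k+2}/(F_{k+3} − z·F_{k+1}) and the generating function z²·(F_{k+2}/F_{2k+3})²·F_{2k+2} of directed k-convex polyominoes.) -/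
open Polynomial

theorem fibPoly_rec (n : ℕ) :
    fibPoly (n + 2) = fibPoly (n + 1) - Polynomial.X * fibPoly n := by
  rw [fibPoly]

theorem fibPoly_add_aux (m n : ℕ) :
    fibPoly (m + n + 1) =
      fibPoly (m + 1) * fibPoly (n + 1) - Polynomial.X * fibPoly m * fibPoly n := by
  induction m generalizing n with
  | zero => simp [fibPoly]
  | succ m ih =>
    have h := ih (n + 1)
    rw [show m + 1 + n + 1 = m + (n + 1) + 1 by ring, h, show m + 1 + 1 = m + 2 by ring,
      fibPoly_rec m, show n + 1 + 1 = n + 2 by ring, fibPoly_rec n]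
    ring

theorem fibPoly_cassini (n : ℕ) :
    fibPoly (n + 1) ^ 2 - fibPoly (n + 2) * fibPoly n = Polynomial.X ^ n := by
  induction n with
  | zero => simp [fibPoly]
  | succ n ih =>
    rw [show n + 1 + 2 = (n + 1) + 2 by ring, fibPoly_rec (n + 1), pow_succ Polynomial.X n, ← ih,
      show n + 1 + 1 = n + 2 by ring, fibPoly_rec n]
    ring

theorem fibPoly_denominator_cleared (k : ℕ) :
    ((fibPoly (2 * k + 3)) ^ 2 - Polynomial.X ^ (2 * k + 2)) * fibPoly (k + 2) =
      (fibPoly (k + 3) - Polynomial.X * fibPoly (k + 1)) *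
        (fibPoly (k + 2)) ^ 2 * fibPoly (2 * k + 2) := by
  have h1 := fibPoly_cassini (2 * k + 2)
  have h2 := fibPoly_add_aux (k + 1) (k + 2)
  rw [show k + 1 + (k + 2) + 1 = 2 * k + 2 + 2 by ring] at h2
  rw [← h1, h2]
  ring
end
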